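/- arXiv:2602.10917 — 5 statements merged into one kernel-verified Lean document; each statement's English description precedes it below -/
import Mathlib

section
/- For every integer t ≥ 2, ∑_{j=1}^{⌊t/2⌋} j^{−5/3} · exp(−∑_{k=j+1}^t 1/k) ≤ 6·2^{−1/3} · t^{−2/3}. -/
/-!
Comparing the sum with `∫ 1/x` gives `exp (-∑_{k=j+1}^t 1/k) ≤ (j + 1) / (t + 1) ≤ 2j / (t + 1)`, so
the exponential factor turns `j ^ (-5/3)` into a multiple of `j ^ (-2/3)`, whose sum up to `n`
telescopes against `3 * n ^ (1/3)`; take `n = ⌊t/2⌋`.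
-/

lemma log_div_le_sum_Icc_one_div (j t : ℕ) :
    Real.log (((t : ℝ) + 1) / (j + 1)) ≤ ∑ k ∈ Finset.Icc (j + 1) t, (1 : ℝ) / k := by
  obtain hjt | htj := le_total j t
  · have integral_le_sum :=
      (inv_antitoneOn_Icc_right (show (0 : ℝ) < (j + 1 : ℕ) by positivity)).integral_le_sum_Ico
        (Nat.add_le_add_right hjt 1)
    rw [integral_inv_of_pos (by positivity) (by positivity),
      Finset.Ico_add_one_right_eq_Icc] at integral_le_sum
    simpa only [one_div, Nat.cast_add_one] using integral_le_sum
  · calc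
      Real.log (((t : ℝ) + 1) / (j + 1)) ≤ 0 :=
        Real.log_nonpos (by positivity) (div_le_one_of_le₀ (by gcongr) (by positivity))
      _ ≤ ∑ k ∈ Finset.Icc (j + 1) t, (1 : ℝ) / k := by positivity

lemma exp_neg_sum_Icc_one_div_le (j t : ℕ) :
    Real.exp (-∑ k ∈ Finset.Icc (j + 1) t, (1 : ℝ) / k) ≤ ((j : ℝ) + 1) / (t + 1) := by
  rw [← Real.le_log_iff_exp_le (by positivity), ← inv_div, Real.log_inv, neg_le_neg_iff]
  exact log_div_le_sum_Icc_one_div j t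

lemma mul_rpow_sub_one_le_rpow_sub_rpow {s x : ℝ} (hs₀ : 0 ≤ s) (hs₁ : s ≤ 1) (hx : 0 ≤ x) :
    s * (x + 1) ^ (s - 1) ≤ (x + 1) ^ s - x ^ s := by
  have hx₁ : 0 < x + 1 := by positivity
  have bernoulli : (1 + -(1 / (x + 1))) ^ s ≤ 1 + s * -(1 / (x + 1)) := by
    refine rpow_one_add_le_one_add_mul_self ?_ hs₀ hs₁
    rw [neg_le_neg_iff, div_le_one hx₁]
    linarith
  have ratio : 1 + -(1 / (x + 1)) = x / (x + 1) := by
    field_simp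
    ring
  rw [ratio, Real.div_rpow hx hx₁.le, div_le_iff₀ (by positivity)] at bernoulli
  rw [Real.rpow_sub_one hx₁.ne']
  linear_combination bernoulli

lemma sum_Icc_rpow_sub_one_le {s : ℝ} (hs₀ : 0 < s) (hs₁ : s ≤ 1) (n : ℕ) :
    ∑ j ∈ Finset.Icc 1 n, (j : ℝ) ^ (s - 1) ≤ (n : ℝ) ^ s / s := by
  induction n with
  | zero => simp [hs₀.ne']
  | succ n ih =>
    have step := mul_rpow_sub_one_le_rpow_sub_rpow hs₀.le hs₁ n.cast_nonneg
    rw [Finset.sum_Icc_succ_top (by lia), le_div_iff₀ hs₀]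
    rw [le_div_iff₀ hs₀] at ih
    push_cast
    linarith

lemma rpow_sub_two_mul_exp_neg_sum_Icc_one_div_le (s : ℝ) {j : ℕ} (hj : 1 ≤ j) (t : ℕ) :
    (j : ℝ) ^ (s - 2) * Real.exp (-∑ k ∈ Finset.Icc (j + 1) t, (1 : ℝ) / k) ≤
      2 / (t + 1) * (j : ℝ) ^ (s - 1) := by
  have hj' : (1 : ℝ) ≤ j := by exact_mod_cast hj
  calc
    _ ≤ (j : ℝ) ^ (s - 2) * (((j : ℝ) + 1) / (t + 1)) := by
      gcongr
      exact exp_neg_sum_Icc_one_div_le j t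
    _ ≤ (j : ℝ) ^ (s - 2) * (2 * j / (t + 1)) := by
      gcongr
      linarith
    _ = 2 / (t + 1) * ((j : ℝ) ^ (s - 2) * j) := by ring
    _ = 2 / (t + 1) * (j : ℝ) ^ (s - 1) := by
      rw [← Real.rpow_add_one (by positivity)]
      ring_nf

lemma sum_Icc_rpow_sub_two_mul_exp_neg_sum_le {s : ℝ} (hs₀ : 0 < s) (hs₁ : s ≤ 1) (n t : ℕ) :
    ∑ j ∈ Finset.Icc 1 n,
        (j : ℝ) ^ (s - 2) * Real.exp (-∑ k ∈ Finset.Icc (j + 1) t, (1 : ℝ) / k) ≤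
      2 / (t + 1) * ((n : ℝ) ^ s / s) := by
  calc
    _ ≤ ∑ j ∈ Finset.Icc 1 n, 2 / ((t : ℝ) + 1) * (j : ℝ) ^ (s - 1) := by
      refine Finset.sum_le_sum fun j hj ↦ ?_
      exact rpow_sub_two_mul_exp_neg_sum_Icc_one_div_le s (Finset.mem_Icc.1 hj).1 t
    _ = 2 / (t + 1) * ∑ j ∈ Finset.Icc 1 n, (j : ℝ) ^ (s - 1) := by rw [Finset.mul_sum]
    _ ≤ 2 / (t + 1) * ((n : ℝ) ^ s / s) := by
      gcongr
      exact sum_Icc_rpow_sub_one_le hs₀ hs₁ n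

/-- For every integer `t ≥ 2`,
`∑_{j=1}^{⌊t/2⌋} j^{−5/3} · exp(−∑_{k=j+1}^t 1/k) ≤ 6·2^{−1/3}·t^{−2/3}`. -/
theorem stmt_3 (t : ℕ) (ht : 2 ≤ t) :
    ∑ j ∈ Finset.Icc 1 (t / 2),
        (j : ℝ) ^ (-(5/3) : ℝ) * Real.exp (-∑ k ∈ Finset.Icc (j + 1) t, (1 : ℝ) / k) ≤
      6 * (2 : ℝ) ^ (-(1/3) : ℝ) * (t : ℝ) ^ (-(2/3) : ℝ) := by
  have ht₀ : (0 : ℝ) < t := by positivity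
  have exponent : (-(5/3) : ℝ) = 1/3 - 2 := by norm_num
  rw [exponent]
  calc
    _ ≤ 2 / ((t : ℝ) + 1) * (((t / 2 : ℕ) : ℝ) ^ (1/3 : ℝ) / (1/3)) :=
      sum_Icc_rpow_sub_two_mul_exp_neg_sum_le (by norm_num) (by norm_num) (t / 2) t
    _ ≤ 2 / t * (((t : ℝ) / 2) ^ (1/3 : ℝ) / (1/3)) := by
      gcongr
      · linarith
      · exact Nat.cast_div_le
    _ = 6 * (2 : ℝ) ^ (-(1/3) : ℝ) * ((t : ℝ) ^ (1/3 : ℝ) / t) := by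
      rw [Real.div_rpow ht₀.le zero_le_two, Real.rpow_neg zero_le_two]
      ring
    _ = 6 * (2 : ℝ) ^ (-(1/3) : ℝ) * (t : ℝ) ^ (-(2/3) : ℝ) := by
      rw [← Real.rpow_sub_one ht₀.ne']
      norm_num
end

section
/- For every integer t ≥ 2, ∑_{j=⌊t/2⌋+1}^{t} j^{−5/3} · exp(−∑_{k=j+1}^t 1/k) ≤ 2^{8/3} · t^{−2/3}. -/
/-! The exponential weights are at most `1`, every index `j` in the upper half satisfies
`t / 2 ≤ j`, and there are at most `t` indices. Hence the sum is at most
`t * (t / 2) ^ (-5/3) = 2 ^ (5/3) * t ^ (-2/3)`, which leaves a factor `2` to spare. -/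

open Finset

theorem exp_neg_sum_le_one {ι : Type*} {s : Finset ι} {f : ι → ℝ} (hf : ∀ i ∈ s, 0 ≤ f i) :
    Real.exp (-∑ i ∈ s, f i) ≤ 1 :=
  Real.exp_le_one_iff.mpr (neg_nonpos.mpr (sum_nonneg hf))

theorem sum_rpow_neg_mul_le_card_mul_rpow_neg {ι : Type*} {s : Finset ι} {a w : ι → ℝ} {x p : ℝ}
    (hx : 0 < x) (hp : 0 ≤ p) (ha : ∀ i ∈ s, x ≤ a i) (hw : ∀ i ∈ s, w i ≤ 1) :
    ∑ i ∈ s, a i ^ (-p) * w i ≤ #s * x ^ (-p) := by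
  rw [← nsmul_eq_mul]
  refine sum_le_card_nsmul _ _ _ fun i hi ↦ ?_
  have hai : 0 ≤ a i := hx.le.trans (ha i hi)
  calc a i ^ (-p) * w i
      ≤ a i ^ (-p) := mul_le_of_le_one_right (Real.rpow_nonneg hai _) (hw i hi)
    _ ≤ x ^ (-p) := Real.rpow_le_rpow_of_nonpos hx (ha i hi) (neg_nonpos.mpr hp)

theorem mul_div_rpow_neg {x c : ℝ} (hx : 0 < x) (hc : 0 ≤ c) (p : ℝ) :
    x * (x / c) ^ (-p) = c ^ p * x ^ (1 - p) := by
  rw [Real.div_rpow hx.le hc, Real.rpow_neg hc, div_inv_eq_mul, sub_eq_add_neg,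
    Real.rpow_add hx, Real.rpow_one]
  ring

theorem sum_Icc_half_rpow_neg_mul_le {t : ℕ} {w : ℕ → ℝ} {p : ℝ} (ht : 0 < t) (hp : 0 ≤ p)
    (hw : ∀ j ∈ Icc (t / 2 + 1) t, w j ≤ 1) :
    ∑ j ∈ Icc (t / 2 + 1) t, (j : ℝ) ^ (-p) * w j ≤ 2 ^ p * (t : ℝ) ^ (1 - p) := by
  have ht' : (0 : ℝ) < t := Nat.cast_pos.mpr ht
  have half_le : ∀ j ∈ Icc (t / 2 + 1) t, (t : ℝ) / 2 ≤ j := fun j hj ↦ by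
    have htj : t ≤ j * 2 := by grind
    rw [div_le_iff₀ two_pos]
    exact_mod_cast htj
  have card_le : #(Icc (t / 2 + 1) t) ≤ t := by
    rw [Nat.card_Icc]
    lia
  calc ∑ j ∈ Icc (t / 2 + 1) t, (j : ℝ) ^ (-p) * w j
      ≤ #(Icc (t / 2 + 1) t) * ((t : ℝ) / 2) ^ (-p) :=
        sum_rpow_neg_mul_le_card_mul_rpow_neg (half_pos ht') hp half_le hw
    _ ≤ t * ((t : ℝ) / 2) ^ (-p) := by gcongr
    _ = 2 ^ p * (t : ℝ) ^ (1 - p) := mul_div_rpow_neg ht' zero_le_two p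

/-- For every integer `t ≥ 2`,
`∑_{j=⌊t/2⌋+1}^{t} j^{−5/3} · exp(−∑_{k=j+1}^t 1/k) ≤ 2^{8/3}·t^{−2/3}`. -/
theorem stmt_4 (t : ℕ) (ht : 2 ≤ t) :
    ∑ j ∈ Finset.Icc (t / 2 + 1) t,
        (j : ℝ) ^ (-(5/3) : ℝ) * Real.exp (-∑ k ∈ Finset.Icc (j + 1) t, (1 : ℝ) / k) ≤
      (2 : ℝ) ^ ((8/3) : ℝ) * (t : ℝ) ^ (-(2/3) : ℝ) := by
  calc ∑ j ∈ Icc (t / 2 + 1) t,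
        (j : ℝ) ^ (-(5/3) : ℝ) * Real.exp (-∑ k ∈ Icc (j + 1) t, (1 : ℝ) / k)
      ≤ 2 ^ (5/3 : ℝ) * (t : ℝ) ^ (1 - 5/3 : ℝ) :=
        sum_Icc_half_rpow_neg_mul_le (by lia) (by norm_num)
          fun j _ ↦ exp_neg_sum_le_one fun k _ ↦ by positivity
    _ = 2 ^ (5/3 : ℝ) * (t : ℝ) ^ (-(2/3) : ℝ) := by norm_num
    _ ≤ 2 ^ (8/3 : ℝ) * (t : ℝ) ^ (-(2/3) : ℝ) := by gcongr <;> norm_num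
end

section
/- Let A ≥ 1 be an integer, let π : {1,…,A} → ℝ be a probability vector with strictly positive entries, let η ≥ 0, τ ≥ 0 be reals with η·τ ≤ 1/2, let C₀ ≥ 0 be a real, and let Q : {1,…,A} → ℝ satisfy 0 ≤ Q_a ≤ C₀ − τ·ln(π_a) for every a. Then ∑_{a=1}^A π_a · exp(η·Q_a) · Q_a^2 ≤ exp(η·C₀) · ( 2·A^{ητ}·C₀^2 + (128/e^2)·τ^2·A^{3/4} ). -/
/-!
Bounding `Q a` by `C - τ * log (π a)` and using `(x + y) ^ 2 ≤ 2 * (x ^ 2 + y ^ 2)` leaves the power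
sum `∑ π a ^ (1 - η * τ)`, with and without a factor `log (π a) ^ 2`. At the price of a factor
`π a ^ (-δ)`, the squared logarithm is bounded by a constant, since `y * exp (-y) ≤ exp (-1)` at
`y = -(δ / 2) * log (π a)`. Concavity of `x ↦ x ^ r` bounds the two remaining power sums.
-/

open Real (exp log)

lemma sum_rpow_le_card_rpow_mul_sum_rpow {ι : Type*} (s : Finset ι) {f : ι → ℝ}
    (hf : ∀ i ∈ s, 0 ≤ f i) {r : ℝ} (hr₀ : 0 ≤ r) (hr₁ : r ≤ 1) :
    ∑ i ∈ s, f i ^ r ≤ (s.card : ℝ) ^ (1 - r) * (∑ i ∈ s, f i) ^ r := by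
  rcases s.eq_empty_or_nonempty with rfl | hs
  · simp only [Finset.sum_empty]
    positivity
  have hcard : 0 < (s.card : ℝ) := by exact_mod_cast hs.card_pos
  have mean_rpow_le : ∑ i ∈ s, (s.card : ℝ)⁻¹ * f i ^ r ≤ (∑ i ∈ s, (s.card : ℝ)⁻¹ * f i) ^ r :=
    (Real.concaveOn_rpow hr₀ hr₁).le_map_sum (fun _ _ ↦ by positivity) (by simp [hcard.ne']) hf
  rw [← Finset.mul_sum, ← Finset.mul_sum, inv_mul_le_iff₀ hcard,
    Real.mul_rpow (by positivity) (Finset.sum_nonneg hf), Real.inv_rpow hcard.le] at mean_rpow_le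
  rwa [Real.rpow_sub hcard, Real.rpow_one, div_eq_mul_inv, mul_assoc]

lemma sum_rpow_one_sub_le_card_rpow {ι : Type*} (s : Finset ι) {p : ι → ℝ}
    (hp : ∀ i ∈ s, 0 ≤ p i) (hsum : ∑ i ∈ s, p i ≤ 1) {c : ℝ} (hc₀ : 0 ≤ c) (hc₁ : c ≤ 1) :
    ∑ i ∈ s, p i ^ (1 - c) ≤ (s.card : ℝ) ^ c := by
  have hr : 0 ≤ 1 - c := sub_nonneg.2 hc₁
  calc ∑ i ∈ s, p i ^ (1 - c)
      ≤ (s.card : ℝ) ^ (1 - (1 - c)) * (∑ i ∈ s, p i) ^ (1 - c) :=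
        sum_rpow_le_card_rpow_mul_sum_rpow s hp hr (sub_le_self 1 hc₀)
    _ ≤ (s.card : ℝ) ^ c := by
        rw [sub_sub_cancel]
        exact mul_le_of_le_one_right (by positivity)
          (Real.rpow_le_one (Finset.sum_nonneg hp) hsum hr)

lemma neg_log_mul_rpow_le {p ε : ℝ} (hp : 0 < p) (hε : 0 < ε) :
    -log p * p ^ ε ≤ 1 / (exp 1 * ε) := by
  rw [Real.rpow_def_of_pos hp, le_div_iff₀ (by positivity)]
  calc -log p * exp (log p * ε) * (exp 1 * ε)
      = -log p * ε * exp (-(-log p * ε)) * exp 1 := by ring_nf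
    _ ≤ exp (-1) * exp 1 := by gcongr; exact Real.mul_exp_neg_le_exp_neg_one _
    _ = 1 := by rw [← Real.exp_add, neg_add_cancel, Real.exp_zero]

lemma log_sq_mul_rpow_le {p δ : ℝ} (hp : 0 < p) (hp₁ : p ≤ 1) (hδ : 0 < δ) :
    log p ^ 2 * p ^ δ ≤ 4 / (exp 1 * δ) ^ 2 := by
  have hlog : 0 ≤ -log p := neg_nonneg.2 (Real.log_nonpos hp.le hp₁)
  calc log p ^ 2 * p ^ δ
      = (-log p * p ^ (δ / 2)) ^ 2 := by
        rw [mul_pow, neg_sq, ← Real.rpow_mul_natCast hp.le, Nat.cast_ofNat,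
          div_mul_cancel₀ δ two_ne_zero]
    _ ≤ (1 / (exp 1 * (δ / 2))) ^ 2 := by
        gcongr
        exact neg_log_mul_rpow_le hp (half_pos hδ)
    _ = 4 / (exp 1 * δ) ^ 2 := by field_simp; norm_num

section PointwiseBound

variable {p q C η τ : ℝ}

lemma exp_mul_le_of_le_sub_mul_log (hp : 0 < p) (hη : 0 ≤ η) (hq : q ≤ C - τ * log p) :
    exp (η * q) ≤ exp (η * C) * p ^ (-(η * τ)) := by
  rw [Real.rpow_def_of_pos hp, ← Real.exp_add, Real.exp_le_exp]
  linarith [mul_le_mul_of_nonneg_left hq hη]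

lemma sq_le_of_le_sub_mul_log (hq₀ : 0 ≤ q) (hq : q ≤ C - τ * log p) :
    q ^ 2 ≤ 2 * C ^ 2 + 2 * τ ^ 2 * log p ^ 2 :=
  calc q ^ 2 ≤ (C + -(τ * log p)) ^ 2 := pow_le_pow_left₀ hq₀ hq 2
    _ ≤ 2 * (C ^ 2 + (-(τ * log p)) ^ 2) := add_sq_le
    _ = 2 * C ^ 2 + 2 * τ ^ 2 * log p ^ 2 := by ring

lemma mul_exp_mul_sq_le {δ : ℝ} (hp : 0 < p) (hp₁ : p ≤ 1) (hη : 0 ≤ η) (hδ : 0 < δ)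
    (hq₀ : 0 ≤ q) (hq : q ≤ C - τ * log p) :
    p * exp (η * q) * q ^ 2 ≤ exp (η * C) * (2 * C ^ 2 * p ^ (1 - η * τ) +
      8 / (exp 1 * δ) ^ 2 * τ ^ 2 * p ^ (1 - (η * τ + δ))) := by
  have rpow_split : p ^ (1 - η * τ) = p ^ (1 - (η * τ + δ)) * p ^ δ := by
    rw [← Real.rpow_add hp]
    ring_nf
  calc p * exp (η * q) * q ^ 2
      ≤ p * (exp (η * C) * p ^ (-(η * τ))) * (2 * C ^ 2 + 2 * τ ^ 2 * log p ^ 2) := by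
        gcongr
        · exact exp_mul_le_of_le_sub_mul_log hp hη hq
        · exact sq_le_of_le_sub_mul_log hq₀ hq
    _ = exp (η * C) * p ^ (1 - η * τ) * (2 * C ^ 2 + 2 * τ ^ 2 * log p ^ 2) := by
        rw [sub_eq_add_neg, Real.rpow_add hp, Real.rpow_one]
        ring
    _ = exp (η * C) * (2 * C ^ 2 * p ^ (1 - η * τ) +
          2 * τ ^ 2 * p ^ (1 - (η * τ + δ)) * (log p ^ 2 * p ^ δ)) := by
        rw [rpow_split]
        ring
    _ ≤ exp (η * C) * (2 * C ^ 2 * p ^ (1 - η * τ) +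
          2 * τ ^ 2 * p ^ (1 - (η * τ + δ)) * (4 / (exp 1 * δ) ^ 2)) := by
        gcongr
        exact log_sq_mul_rpow_le hp hp₁ hδ
    _ = _ := by ring

end PointwiseBound

theorem stmt_13_general {ι : Type*} [Fintype ι] {π : ι → ℝ} (hπ : ∀ a, 0 < π a)
    (hsum : ∑ a, π a ≤ 1) {η τ δ : ℝ} (hη : 0 ≤ η) (hτ : 0 ≤ τ) (hδ : 0 < δ)
    (hητδ : η * τ + δ ≤ 1) {C : ℝ} {Q : ι → ℝ} (hQ₀ : ∀ a, 0 ≤ Q a)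
    (hQ : ∀ a, Q a ≤ C - τ * log (π a)) :
    ∑ a, π a * exp (η * Q a) * Q a ^ 2 ≤
      exp (η * C) * (2 * (Fintype.card ι : ℝ) ^ (η * τ) * C ^ 2 +
        8 / (exp 1 * δ) ^ 2 * τ ^ 2 * (Fintype.card ι : ℝ) ^ (η * τ + δ)) := by
  have hπ₀ : ∀ a ∈ Finset.univ, 0 ≤ π a := fun a _ ↦ (hπ a).le
  have hπ₁ (a : ι) : π a ≤ 1 := (Finset.single_le_sum hπ₀ (Finset.mem_univ a)).trans hsum
  have hητ : 0 ≤ η * τ := mul_nonneg hη hτ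
  calc ∑ a, π a * exp (η * Q a) * Q a ^ 2
      ≤ ∑ a, exp (η * C) * (2 * C ^ 2 * π a ^ (1 - η * τ) +
          8 / (exp 1 * δ) ^ 2 * τ ^ 2 * π a ^ (1 - (η * τ + δ))) :=
        Finset.sum_le_sum fun a _ ↦ mul_exp_mul_sq_le (hπ a) (hπ₁ a) hη hδ (hQ₀ a) (hQ a)
    _ = exp (η * C) * (2 * (∑ a, π a ^ (1 - η * τ)) * C ^ 2 +
          8 / (exp 1 * δ) ^ 2 * τ ^ 2 * ∑ a, π a ^ (1 - (η * τ + δ))) := by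
        rw [← Finset.mul_sum, Finset.sum_add_distrib, ← Finset.mul_sum, ← Finset.mul_sum,
          mul_right_comm 2 (C ^ 2)]
    _ ≤ _ := by
        gcongr
        · exact sum_rpow_one_sub_le_card_rpow _ hπ₀ hsum hητ (by linarith)
        · exact sum_rpow_one_sub_le_card_rpow _ hπ₀ hsum (by linarith) hητδ

/-- For a probability vector `π` on `A ≥ 1` elements with strictly positive
entries, reals `η, τ ≥ 0` with `η·τ ≤ 1/2`, `C₀ ≥ 0`, and `Q` with
`0 ≤ Q_a ≤ C₀ − τ·ln(π_a)` for all `a`, one has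
`∑_a π_a·exp(η·Q_a)·Q_a² ≤ exp(η·C₀)·(2·A^{ητ}·C₀² + (128/e²)·τ²·A^{3/4})`. -/
theorem stmt_13 (A : ℕ) (hA : 1 ≤ A) (π : Fin A → ℝ)
    (hπ : ∀ a, 0 < π a) (hsum : ∑ a, π a = 1)
    (η τ : ℝ) (hη : 0 ≤ η) (hτ : 0 ≤ τ) (hητ : η * τ ≤ 1/2)
    (C₀ : ℝ) (hC₀ : 0 ≤ C₀) (Q : Fin A → ℝ)
    (hQ0 : ∀ a, 0 ≤ Q a) (hQub : ∀ a, Q a ≤ C₀ - τ * Real.log (π a)) :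
    ∑ a, π a * Real.exp (η * Q a) * (Q a) ^ 2 ≤
      Real.exp (η * C₀) *
        (2 * (A : ℝ) ^ (η * τ) * C₀ ^ 2 + (128 / Real.exp 1 ^ 2) * τ ^ 2 * (A : ℝ) ^ ((3/4) : ℝ)) := by
  have one_le_A : (1 : ℝ) ≤ A := by exact_mod_cast hA
  have bound := stmt_13_general hπ hsum.le hη hτ (δ := 1 / 4) (by norm_num) (by linarith) hQ0 hQub
  rw [Fintype.card_fin, show 8 / (Real.exp 1 * (1 / 4)) ^ 2 = 128 / Real.exp 1 ^ 2 by ring] at bound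
  refine bound.trans ?_
  gcongr
  linarith
end

section
/- Let ε ∈ (0,1] and let c₁, c₂, c₃, c₄ be positive reals with c₁ ≤ c₂, c₃ ≤ c₄ and c₁·c₃·ε^4 ≤ 1. Let t ≥ 1 be an integer and suppose (η_j)_{j=1}^t and (τ_j)_{j=1}^t are reals with c₁·ε^3 ≤ η_j ≤ c₂·ε^3 and c₃·ε ≤ τ_j ≤ c₄·ε for all j. Then ∑_{j=1}^t η_j^2 · exp(−∑_{k=j+1}^t η_k·τ_k) ≤ (2·c₂^2 / (c₁·c₃)) · ε^2, where for j = t the inner sum is the empty sum, equal to 0. -/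
/-!
The weighted sums `S n = ∑ j ≤ n, a j * ∏ k ∈ (j, n], b k` satisfy `S n = b n * S (n - 1) + a n`,
so any constant `B ≥ 0` with `b n * B + a n ≤ B` for all `n` bounds every `S n`. When `a n ≤ A` and
`b n = exp (-g n) ≤ exp (-x)`, the fixed point `B = A / (1 - exp (-x))` qualifies, and
`1 - exp (-x) ≥ x / 2` on `[0, 1]`. Take `a = η ^ 2` and `g = η * τ`.
-/

open Finset

theorem sum_mul_prod_Icc_succ {R : Type*} [CommSemiring R] (a b : ℕ → R) {m n : ℕ}
    (hmn : m ≤ n + 1) :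
    ∑ j ∈ Icc m (n + 1), a j * ∏ k ∈ Icc (j + 1) (n + 1), b k =
      b (n + 1) * (∑ j ∈ Icc m n, a j * ∏ k ∈ Icc (j + 1) n, b k) + a (n + 1) := by
  rw [sum_Icc_succ_top hmn, mul_sum, Icc_eq_empty_of_lt (n + 1).lt_succ_self, prod_empty, mul_one]
  congr 1
  refine sum_congr rfl fun j hj ↦ ?_
  rw [prod_Icc_succ_top (Nat.succ_le_succ (mem_Icc.mp hj).2)]
  ring

theorem sum_mul_prod_Icc_le {R : Type*} [CommSemiring R] [PartialOrder R] [IsOrderedRing R]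
    {a b : ℕ → R} {B : R} {m n : ℕ} (hB : 0 ≤ B) (hb : ∀ j, m ≤ j → j ≤ n → 0 ≤ b j)
    (hstep : ∀ j, m ≤ j → j ≤ n → b j * B + a j ≤ B) :
    ∑ j ∈ Icc m n, a j * ∏ k ∈ Icc (j + 1) n, b k ≤ B := by
  induction n with
  | zero =>
    rcases m.eq_zero_or_pos with rfl | hm
    · have hb₀ : 0 ≤ b 0 := hb 0 le_rfl le_rfl
      simpa using (le_add_of_nonneg_left (mul_nonneg hb₀ hB)).trans (hstep 0 le_rfl le_rfl)
    · simpa [Icc_eq_empty_of_lt hm] using hB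
  | succ n ih =>
    rcases le_or_gt m (n + 1) with hmn | hnm
    · have hbn : 0 ≤ b (n + 1) := hb (n + 1) hmn le_rfl
      calc ∑ j ∈ Icc m (n + 1), a j * ∏ k ∈ Icc (j + 1) (n + 1), b k
        _ = b (n + 1) * (∑ j ∈ Icc m n, a j * ∏ k ∈ Icc (j + 1) n, b k) + a (n + 1) :=
          sum_mul_prod_Icc_succ a b hmn
        _ ≤ b (n + 1) * B + a (n + 1) := by
          gcongr
          exact ih (fun j hmj hjn ↦ hb j hmj (hjn.trans n.le_succ))
            fun j hmj hjn ↦ hstep j hmj (hjn.trans n.le_succ)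
        _ ≤ B := hstep (n + 1) hmn le_rfl
    · simpa [Icc_eq_empty_of_lt hnm] using hB

theorem sum_mul_exp_neg_sum_Icc_le_div {a g : ℕ → ℝ} {A x : ℝ} {m n : ℕ} (hA : 0 ≤ A)
    (hx : 0 < x) (ha : ∀ j, m ≤ j → j ≤ n → a j ≤ A) (hg : ∀ j, m ≤ j → j ≤ n → x ≤ g j) :
    ∑ j ∈ Icc m n, a j * Real.exp (-∑ k ∈ Icc (j + 1) n, g k) ≤ A / (1 - Real.exp (-x)) := by
  have hgap : 0 < 1 - Real.exp (-x) := by simpa using hx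
  simp only [← sum_neg_distrib, Real.exp_sum]
  refine sum_mul_prod_Icc_le (by positivity) (fun j _ _ ↦ (Real.exp_pos _).le)
    fun j hmj hjn ↦ ?_
  calc Real.exp (-g j) * (A / (1 - Real.exp (-x))) + a j
    _ ≤ Real.exp (-x) * (A / (1 - Real.exp (-x))) + A := by
      gcongr
      exacts [hg j hmj hjn, ha j hmj hjn]
    _ = A / (1 - Real.exp (-x)) := by
      field_simp
      ring

theorem half_le_one_sub_exp_neg {x : ℝ} (hx₀ : 0 ≤ x) (hx₁ : x ≤ 1) :
    x / 2 ≤ 1 - Real.exp (-x) :=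
  calc x / 2
    _ ≤ x / (x + 1) := by gcongr; linarith
    _ = 1 - (x + 1)⁻¹ := by field_simp; ring
    _ ≤ 1 - Real.exp (-x) := by
      rw [Real.exp_neg]
      gcongr
      exact Real.add_one_le_exp x

theorem stmt_15_general {h H s : ℝ} (hh : 0 < h) (hs : 0 < s) (hhs : h * s ≤ 1) {m n : ℕ}
    {η τ : ℕ → ℝ} (hηl : ∀ j, m ≤ j → j ≤ n → h ≤ η j) (hηu : ∀ j, m ≤ j → j ≤ n → η j ≤ H)
    (hτl : ∀ j, m ≤ j → j ≤ n → s ≤ τ j) :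
    ∑ j ∈ Icc m n, η j ^ 2 * Real.exp (-∑ k ∈ Icc (j + 1) n, η k * τ k) ≤
      2 * H ^ 2 / (h * s) := by
  have hη₀ : ∀ j, m ≤ j → j ≤ n → 0 ≤ η j := fun j hmj hjn ↦ hh.le.trans (hηl j hmj hjn)
  calc ∑ j ∈ Icc m n, η j ^ 2 * Real.exp (-∑ k ∈ Icc (j + 1) n, η k * τ k)
    _ ≤ H ^ 2 / (1 - Real.exp (-(h * s))) :=
      sum_mul_exp_neg_sum_Icc_le_div (sq_nonneg H) (mul_pos hh hs)
        (fun j hmj hjn ↦ pow_le_pow_left₀ (hη₀ j hmj hjn) (hηu j hmj hjn) 2)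
        fun j hmj hjn ↦ mul_le_mul (hηl j hmj hjn) (hτl j hmj hjn) hs.le (hη₀ j hmj hjn)
    _ ≤ H ^ 2 / (h * s / 2) := by
      gcongr
      exact half_le_one_sub_exp_neg (mul_pos hh hs).le hhs
    _ = 2 * H ^ 2 / (h * s) := by field_simp

/-- Upper bound on the recursive error sum: if `c₁ε³ ≤ η_j ≤ c₂ε³` and
`c₃ε ≤ τ_j ≤ c₄ε` for all `1 ≤ j ≤ t`, with `c₁ ≤ c₂`, `c₃ ≤ c₄`, `c₁c₃ε⁴ ≤ 1`, then
`∑_{j=1}^t η_j²·exp(−∑_{k=j+1}^t η_kτ_k) ≤ (2c₂²/(c₁c₃))·ε²`. -/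
theorem stmt_15 (ε : ℝ) (hε0 : 0 < ε) (hε1 : ε ≤ 1)
    (c₁ c₂ c₃ c₄ : ℝ) (hc₁ : 0 < c₁) (hc₂ : 0 < c₂) (hc₃ : 0 < c₃) (hc₄ : 0 < c₄)
    (hc12 : c₁ ≤ c₂) (hc34 : c₃ ≤ c₄) (hsmall : c₁ * c₃ * ε ^ 4 ≤ 1)
    (t : ℕ) (ht : 1 ≤ t) (η τ : ℕ → ℝ)
    (hηl : ∀ j, 1 ≤ j → j ≤ t → c₁ * ε ^ 3 ≤ η j) (hηu : ∀ j, 1 ≤ j → j ≤ t → η j ≤ c₂ * ε ^ 3)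
    (hτl : ∀ j, 1 ≤ j → j ≤ t → c₃ * ε ≤ τ j) (hτu : ∀ j, 1 ≤ j → j ≤ t → τ j ≤ c₄ * ε) :
    ∑ j ∈ Finset.Icc 1 t, (η j) ^ 2 * Real.exp (-∑ k ∈ Finset.Icc (j + 1) t, η k * τ k) ≤
      (2 * c₂ ^ 2 / (c₁ * c₃)) * ε ^ 2 := by
  refine (stmt_15_general (by positivity) (by positivity) (by linear_combination hsmall)
    hηl hηu hτl).trans_eq ?_
  field_simp
end

section
/- Let ε ∈ (0,1] and let c₁, c₂, c₃, c₄ be positive reals with c₁ ≤ c₂ and c₃ ≤ c₄. Let t ≥ 1 be an integer with t ≥ ln(2)/(c₂·c₄·ε^4), and suppose (η_j)_{j=1}^t and (τ_j)_{j=1}^t are reals with c₁·ε^3 ≤ η_j ≤ c₂·ε^3 and c₃·ε ≤ τ_j ≤ c₄·ε for all j. Then ∑_{j=1}^t η_j^2 · exp(−∑_{k=j+1}^t η_k·τ_k) ≥ (c₁^2 / (2·c₂·c₄)) · ε^2, where for j = t the inner sum is the empty sum, equal to 0. -/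
/-!
The sum decreases when its weights `η_j²` decrease and its exponents `η_k τ_k` increase, so it is at
least its value at the constant weight `b = (c₁ε³)²` and the constant exponent `x = c₂c₄ε⁴`. That
value is a geometric sum, `b (1 - exp (-t x)) / (1 - exp (-x))`. The denominator is at most `x`, and
`t x ≥ ln 2` makes `1 - exp (-t x)` at least `1 / 2`, which leaves `b / (2 x)`.
-/

open Finset Real

/-- The discounted sum `∑_{j=1}^n a_j exp (-∑_{k=j+1}^n u_k)`: the total after `n` steps, starting
from `0`, when step `k` multiplies the total so far by `exp (-u_k)` and then adds `a_k`. The entries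
`a 0`, `u 0` and `u 1` do not contribute. -/
noncomputable def discountedSum (a u : ℕ → ℝ) (n : ℕ) : ℝ :=
  ∑ j ∈ Icc 1 n, a j * exp (-∑ k ∈ Icc (j + 1) n, u k)

theorem discountedSum_zero (a u : ℕ → ℝ) : discountedSum a u 0 = 0 := by
  simp [discountedSum]

theorem discountedSum_succ (a u : ℕ → ℝ) (n : ℕ) :
    discountedSum a u (n + 1) = exp (-u (n + 1)) * discountedSum a u n + a (n + 1) := by
  have discount_step : ∀ j ∈ Icc 1 n, a j * exp (-∑ k ∈ Icc (j + 1) (n + 1), u k) =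
      exp (-u (n + 1)) * (a j * exp (-∑ k ∈ Icc (j + 1) n, u k)) := fun j hj ↦ by
    rw [sum_Icc_succ_top (by grind), neg_add, exp_add]
    ring
  rw [discountedSum, sum_Icc_succ_top (by lia), sum_congr rfl discount_step, ← mul_sum]
  simp [discountedSum]

theorem discountedSum_nonneg {a u : ℕ → ℝ} {n : ℕ} (ha : ∀ j ∈ Icc 1 n, 0 ≤ a j) :
    0 ≤ discountedSum a u n :=
  sum_nonneg fun j hj ↦ mul_nonneg (ha j hj) (exp_pos _).le

theorem discountedSum_le_discountedSum {a a' u u' : ℕ → ℝ} {n : ℕ}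
    (ha' : ∀ j ∈ Icc 1 n, 0 ≤ a' j) (haa' : ∀ j ∈ Icc 1 n, a j ≤ a' j)
    (huu' : ∀ k ∈ Icc 2 n, u' k ≤ u k) :
    discountedSum a u n ≤ discountedSum a' u' n := by
  refine sum_le_sum fun j hj ↦ ?_
  have exponent_le : ∑ k ∈ Icc (j + 1) n, u' k ≤ ∑ k ∈ Icc (j + 1) n, u k :=
    sum_le_sum fun k hk ↦ huu' k (by grind)
  have weight_nonneg := ha' j hj
  gcongr
  exact haa' j hj

theorem one_sub_exp_neg_mul_discountedSum_const (b x : ℝ) (n : ℕ) :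
    (1 - exp (-x)) * discountedSum (fun _ ↦ b) (fun _ ↦ x) n = b * (1 - exp (-(n * x))) := by
  induction n with
  | zero => simp [discountedSum_zero]
  | succ n ih =>
    have exp_succ : exp (-((n + 1 : ℕ) * x)) = exp (-x) * exp (-(n * x)) := by
      rw [← exp_add]
      push_cast
      ring_nf
    rw [discountedSum_succ, exp_succ]
    linear_combination exp (-x) * ih

theorem mul_one_sub_exp_neg_le_mul_discountedSum {a u : ℕ → ℝ} {b x : ℝ} {n : ℕ} (hb : 0 ≤ b)
    (hx : 0 ≤ x) (ha : ∀ j ∈ Icc 1 n, b ≤ a j) (hu : ∀ k ∈ Icc 2 n, u k ≤ x) :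
    b * (1 - exp (-(n * x))) ≤ x * discountedSum a u n := by
  have const_nonneg : 0 ≤ discountedSum (fun _ ↦ b) (fun _ ↦ x) n :=
    discountedSum_nonneg fun _ _ ↦ hb
  calc b * (1 - exp (-(n * x)))
      = (1 - exp (-x)) * discountedSum (fun _ ↦ b) (fun _ ↦ x) n :=
        (one_sub_exp_neg_mul_discountedSum_const b x n).symm
    _ ≤ x * discountedSum (fun _ ↦ b) (fun _ ↦ x) n := by
        gcongr
        linarith [one_sub_le_exp_neg x]
    _ ≤ x * discountedSum a u n := by
        gcongr
        exact discountedSum_le_discountedSum (fun j hj ↦ hb.trans (ha j hj)) ha hu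

theorem exp_neg_le_half_of_log_two_le {y : ℝ} (hy : log 2 ≤ y) : exp (-y) ≤ 1 / 2 := by
  calc exp (-y) ≤ exp (-log 2) := by gcongr
    _ = 1 / 2 := by rw [exp_neg, exp_log two_pos, one_div]

theorem div_two_mul_le_discountedSum {a u : ℕ → ℝ} {b x : ℝ} {n : ℕ} (hb : 0 ≤ b) (hx : 0 < x)
    (hn : log 2 / x ≤ n) (ha : ∀ j ∈ Icc 1 n, b ≤ a j) (hu : ∀ k ∈ Icc 2 n, u k ≤ x) :
    b / (2 * x) ≤ discountedSum a u n := by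
  have half_le : 1 / 2 ≤ 1 - exp (-(n * x)) := by
    linarith [exp_neg_le_half_of_log_two_le ((div_le_iff₀ hx).mp hn)]
  rw [div_le_iff₀ (by positivity)]
  linarith [mul_le_mul_of_nonneg_left half_le hb,
    mul_one_sub_exp_neg_le_mul_discountedSum hb hx.le ha hu]

theorem stmt_16_general {ε c₁ c₂ c₄ : ℝ} (hε : 0 < ε) (hc₁ : 0 ≤ c₁) (hc₂ : 0 < c₂) (hc₄ : 0 < c₄)
    {t : ℕ} (ht : log 2 / (c₂ * c₄ * ε ^ 4) ≤ t) {η τ : ℕ → ℝ}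
    (hηl : ∀ j, 1 ≤ j → j ≤ t → c₁ * ε ^ 3 ≤ η j) (hηu : ∀ j, 1 ≤ j → j ≤ t → η j ≤ c₂ * ε ^ 3)
    (hτu : ∀ j, 1 ≤ j → j ≤ t → τ j ≤ c₄ * ε) :
    c₁ ^ 2 / (2 * c₂ * c₄) * ε ^ 2 ≤
      ∑ j ∈ Icc 1 t, η j ^ 2 * exp (-∑ k ∈ Icc (j + 1) t, η k * τ k) := by
  have sq_le : ∀ j ∈ Icc 1 t, (c₁ * ε ^ 3) ^ 2 ≤ η j ^ 2 := fun j hj ↦ by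
    obtain ⟨hj1, hjt⟩ := mem_Icc.mp hj
    have η_ge := hηl j hj1 hjt
    gcongr
  have mul_le : ∀ k ∈ Icc 2 t, η k * τ k ≤ c₂ * c₄ * ε ^ 4 := fun k hk ↦ by
    obtain ⟨hk1, hkt⟩ : 1 ≤ k ∧ k ≤ t := by grind
    have η_nonneg : 0 ≤ η k := le_trans (by positivity) (hηl k hk1 hkt)
    calc η k * τ k ≤ η k * (c₄ * ε) := by gcongr; exact hτu k hk1 hkt
      _ ≤ c₂ * ε ^ 3 * (c₄ * ε) := by gcongr; exact hηu k hk1 hkt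
      _ = c₂ * c₄ * ε ^ 4 := by ring
  calc c₁ ^ 2 / (2 * c₂ * c₄) * ε ^ 2 = (c₁ * ε ^ 3) ^ 2 / (2 * (c₂ * c₄ * ε ^ 4)) := by
        field_simp
    _ ≤ _ := div_two_mul_le_discountedSum (by positivity) (by positivity) ht sq_le mul_le

/-- Lower bound on the recursive error sum: if `c₁ε³ ≤ η_j ≤ c₂ε³` and
`c₃ε ≤ τ_j ≤ c₄ε` for all `1 ≤ j ≤ t`, with `c₁ ≤ c₂`, `c₃ ≤ c₄`, and
`t ≥ ln 2/(c₂c₄ε⁴)`, then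
`∑_{j=1}^t η_j²·exp(−∑_{k=j+1}^t η_kτ_k) ≥ (c₁²/(2c₂c₄))·ε²`. -/
theorem stmt_16 (ε : ℝ) (hε0 : 0 < ε) (hε1 : ε ≤ 1)
    (c₁ c₂ c₃ c₄ : ℝ) (hc₁ : 0 < c₁) (hc₂ : 0 < c₂) (hc₃ : 0 < c₃) (hc₄ : 0 < c₄)
    (hc12 : c₁ ≤ c₂) (hc34 : c₃ ≤ c₄)
    (t : ℕ) (ht : 1 ≤ t) (htlarge : Real.log 2 / (c₂ * c₄ * ε ^ 4) ≤ (t : ℝ))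
    (η τ : ℕ → ℝ)
    (hηl : ∀ j, 1 ≤ j → j ≤ t → c₁ * ε ^ 3 ≤ η j) (hηu : ∀ j, 1 ≤ j → j ≤ t → η j ≤ c₂ * ε ^ 3)
    (hτl : ∀ j, 1 ≤ j → j ≤ t → c₃ * ε ≤ τ j) (hτu : ∀ j, 1 ≤ j → j ≤ t → τ j ≤ c₄ * ε) :
    (c₁ ^ 2 / (2 * c₂ * c₄)) * ε ^ 2 ≤
      ∑ j ∈ Finset.Icc 1 t, (η j) ^ 2 * Real.exp (-∑ k ∈ Finset.Icc (j + 1) t, η k * τ k) :=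
  stmt_16_general hε0 hc₁.le hc₂ hc₄ htlarge hηl hηu hτu
end
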